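/- Isodual inequality for spherical triangles: let u₁, u₂, u₃ be linearly independent unit vectors in ℝ³, let S be the cone they generate (the spherical triangle S ∩ S²), and let S° be its polar cone. Let C be the cone generated by the three unit vectors wₖ = (sin θ · cos(2πk/3), sin θ · sin(2πk/3), cos θ), k = 0, 1, 2, for some θ ∈ (0, π/2) — a regular spherical triangle — chosen so that the 2-dimensional Hausdorff measure of C° ∩ S² equals that of S° ∩ S². Then the 2-dimensional Hausdorff measure of S ∩ S² is at most that of C ∩ S². -/

import Mathlib

/-!
By Girard's formula the statement becomes the isoperimetric inequality for spherical triangles.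

If `κ` is the total measure of the sphere divided by `4π`, the region cut out by three half-spaces
with unit inner normals `n₁, n₂, n₃` has measure `κ (2π - ∑ ∠(nᵢ, nⱼ))` (`girard`). This follows by
inclusion-exclusion from the measure of a lune (`lune`), since the antipodal map exchanges the
intersection of the three half-spaces with the complement of their union. The measure of a lune
needs only finiteness and rotation invariance of `μH[2]` on the sphere: average over the rotations
about the edge of the lune and apply Fubini's theorem.

The polar of the cone generated by `u` has normals `-uᵢ`, so its measure is `κ (2π - p)` with `p` the
perimeter of the triangle (`polar_area`). Hence the two triangles have the same perimeter, unless
`κ = 0`, when there is nothing to prove. The cone generated by `u` has the dual basis of `u` as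
normals, so its measure is `κ E` with `E` the spherical excess, and
`cos (E / 2) = (1 + cos a + cos b + cos c) / (4 cos (a/2) cos (b/2) cos (c/2))` (`triangle_area`).

With `X = (b + c - a) / 4` and so on, this is equivalent to L'Huilier's formula
`tan² (E / 4) = tan (p / 4) tan X tan Y tan Z`, where `X + Y + Z = p / 4 < π / 2`. For fixed `p` the
right side is largest for `X = Y = Z` (`mul_le_cube_of_tan`): the addition formula for the tangent
relates the elementary symmetric functions of `tan X, tan Y, tan Z`, and the inequalities of Newton
and Maclaurin between these give the claim.
-/

open MeasureTheory
open scoped ENNReal RealInnerProductSpace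

/-- The cone generated by a finite family of vectors: all nonnegative linear combinations. -/
def coneGen {n : ℕ} (u : Fin n → EuclideanSpace ℝ (Fin 3)) :
    Set (EuclideanSpace ℝ (Fin 3)) :=
  {x | ∃ c : Fin n → ℝ, (∀ i, 0 ≤ c i) ∧ x = ∑ i, c i • u i}

/-- The polar cone of a set. -/
def polarCone (C : Set (EuclideanSpace ℝ (Fin 3))) : Set (EuclideanSpace ℝ (Fin 3)) :=
  {y | ∀ x ∈ C, ⟪y, x⟫ ≤ 0}

/-- The `k`-th vertex of the regular spherical `n`-gon at colatitude `θ`: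
`(sin θ · cos (2πk/n), sin θ · sin (2πk/n), cos θ)`. -/
noncomputable def regVec (n : ℕ) (θ : ℝ) (k : ℕ) : EuclideanSpace ℝ (Fin 3) :=
  (EuclideanSpace.equiv (Fin 3) ℝ).symm
    ![Real.sin θ * Real.cos (2 * Real.pi * k / n),
      Real.sin θ * Real.sin (2 * Real.pi * k / n),
      Real.cos θ]

/-! ### Surface measure of the sphere and rotations -/

/-- The area measure on the unit sphere, as a measure on the ambient space. -/
noncomputable def sphereMeasure : Measure (EuclideanSpace ℝ (Fin 3)) :=
  (μH[2]).restrict (Metric.sphere 0 1)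

/-- The sphere is the image of a box under the (locally Lipschitz) spherical coordinates. -/
theorem hausdorff_sphere_lt_top :
    μH[2] (Metric.sphere (0 : EuclideanSpace ℝ (Fin 3)) 1) < ⊤ := by
  let f : (Fin 2 → ℝ) → EuclideanSpace ℝ (Fin 3) := fun p =>
    !₂[Real.sin (p 0) * Real.cos (p 1), Real.sin (p 0) * Real.sin (p 1), Real.cos (p 0)]
  have hf : ContDiff ℝ 1 f := by
    rw [contDiff_euclidean]
    intro i
    fin_cases i <;> simp [f] <;> fun_prop
  let B : Set (Fin 2 → ℝ) := Set.Icc (fun _ => -10) (fun _ => 10)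
  have hB : IsCompact B := isCompact_Icc
  obtain ⟨K, hK⟩ := hf.locallyLipschitz.locallyLipschitzOn (s := B)
    |>.exists_lipschitzOnWith_of_compact hB
  have hsub : Metric.sphere (0 : EuclideanSpace ℝ (Fin 3)) 1 ⊆ f '' B := by
    intro x hx
    have hx1 : x 0 ^ 2 + x 1 ^ 2 + x 2 ^ 2 = 1 := by
      have h : ‖x‖ = 1 := by simpa using hx
      have h2 := EuclideanSpace.real_norm_sq_eq x
      rw [h, Fin.sum_univ_three] at h2
      linarith
    let z : ℂ := ⟨x 0, x 1⟩
    have hpi := Real.pi_lt_four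
    have hpi0 := Real.pi_pos
    have hz : ‖z‖ = Real.sqrt (1 - x 2 ^ 2) := by
      rw [Complex.norm_def, Complex.normSq_apply]
      congr 1
      simp only [z]; nlinarith
    have h2 : -1 ≤ x 2 ∧ x 2 ≤ 1 := by
      constructor <;> nlinarith [sq_nonneg (x 0), sq_nonneg (x 1)]
    refine ⟨![Real.arccos (x 2), Complex.arg z], ?_, ?_⟩
    · constructor <;> intro i <;> fin_cases i <;> simp
      · linarith [Real.arccos_nonneg (x 2)]
      · linarith [Complex.neg_pi_lt_arg z]
      · linarith [Real.arccos_le_pi (x 2)]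
      · linarith [Complex.arg_le_pi z]
    · ext i
      have h3 := Complex.norm_mul_cos_arg z
      have h4 := Complex.norm_mul_sin_arg z
      rw [hz, ← Real.sin_arccos] at h3 h4
      fin_cases i
      · simpa [f, z] using h3
      · simpa [f, z] using h4
      · simpa [f] using Real.cos_arccos h2.1 h2.2
  refine (measure_mono hsub).trans_lt ?_
  refine (hK.hausdorffMeasure_image_le (by norm_num)).trans_lt ?_
  refine ENNReal.mul_lt_top (by simp) ?_
  have h := hausdorffMeasure_pi_real (ι := Fin 2)
  simp only [Fintype.card_fin, Nat.cast_ofNat] at h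
  rw [h]
  exact hB.measure_lt_top

instance : IsFiniteMeasure sphereMeasure :=
  ⟨by rw [sphereMeasure, Measure.restrict_apply_univ]; exact hausdorff_sphere_lt_top⟩

instance : NullSingletonClass sphereMeasure := by
  have := MeasureTheory.Measure.nullSingletonClass_hausdorff (EuclideanSpace ℝ (Fin 3)) (d := 2) (by norm_num)
  unfold sphereMeasure; infer_instance

theorem sphereMeasure_preimage (g : EuclideanSpace ℝ (Fin 3) ≃ₗᵢ[ℝ] EuclideanSpace ℝ (Fin 3))
    {s : Set (EuclideanSpace ℝ (Fin 3))} (hs : MeasurableSet s) :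
    sphereMeasure (g ⁻¹' s) = sphereMeasure s := by
  have hg : Measurable g := g.continuous.measurable
  rw [sphereMeasure, Measure.restrict_apply hs, Measure.restrict_apply (hg hs),
    ← g.toIsometryEquiv.hausdorffMeasure_preimage 2 (s ∩ _)]
  congr 1
  ext x
  simp

/-- Rotation by `t` about the third coordinate axis, on coordinates. -/
noncomputable def rotFun (t : ℝ) (x : EuclideanSpace ℝ (Fin 3)) : EuclideanSpace ℝ (Fin 3) :=
  !₂[Real.cos t * x 0 - Real.sin t * x 1, Real.sin t * x 0 + Real.cos t * x 1, x 2]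

/-- Rotation by `t` about the third coordinate axis. -/
noncomputable def rot (t : ℝ) : EuclideanSpace ℝ (Fin 3) ≃ₗᵢ[ℝ] EuclideanSpace ℝ (Fin 3) :=
  LinearIsometry.toLinearIsometryEquiv
    { toFun := rotFun t
      map_add' := by
        intro x y; ext i; fin_cases i <;> simp [rotFun] <;> ring
      map_smul' := by
        intro c x; ext i; fin_cases i <;> simp [rotFun] <;> ring
      norm_map' := by
        intro x
        rw [← sq_eq_sq₀ (norm_nonneg _) (norm_nonneg _), EuclideanSpace.real_norm_sq_eq,
          EuclideanSpace.real_norm_sq_eq]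
        simp [rotFun, Fin.sum_univ_three]
        linear_combination (x 0 ^ 2 + x 1 ^ 2) * Real.sin_sq_add_cos_sq t } rfl

theorem rot_apply (t : ℝ) (x : EuclideanSpace ℝ (Fin 3)) : rot t x = rotFun t x := rfl

/-- The set of angles in one period for which two cosines, shifted by `φ` relative to each other,
are both nonnegative has length `π - φ`, whatever the common phase `s`. -/
theorem volume_cos_nonneg (φ : ℝ) (h0 : 0 ≤ φ) (hπ : φ ≤ Real.pi) (s : ℝ) :
    volume ({t : ℝ | 0 ≤ Real.cos (t + s) ∧ 0 ≤ Real.cos (t + s - φ)} ∩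
      Set.Ioc 0 (2 * Real.pi)) = ENNReal.ofReal (Real.pi - φ) := by
  have hpi := Real.pi_pos
  let A : Set ℝ := {t : ℝ | 0 ≤ Real.cos t ∧ 0 ≤ Real.cos (t - φ)}
  have hA : MeasurableSet A := by
    apply MeasurableSet.inter
    · exact measurableSet_le measurable_const Real.measurable_cos
    · exact measurableSet_le measurable_const
        (Real.measurable_cos.comp (measurable_id.sub_const φ))
  have hper : Function.Periodic (A.indicator (fun _ => (1 : ℝ))) (2 * Real.pi) := by
    intro t
    have : (t + 2 * Real.pi ∈ A) ↔ t ∈ A := by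
      simp only [A, Set.mem_ofPred_eq, Real.cos_add_two_pi]
      rw [show t + 2 * Real.pi - φ = (t - φ) + 2 * Real.pi by ring, Real.cos_add_two_pi]
    by_cases h : t ∈ A
    · rw [Set.indicator_of_mem h, Set.indicator_of_mem (this.2 h)]
    · rw [Set.indicator_of_notMem h, Set.indicator_of_notMem (fun h' => h (this.1 h'))]
  have key := hper.intervalIntegral_add_eq (0 + s) (-Real.pi)
  rw [show 0 + s + 2 * Real.pi = 2 * Real.pi + s by ring,
    ← intervalIntegral.integral_comp_add_right (fun t => A.indicator (fun _ => (1 : ℝ)) t) s] at key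
  have e1 : ∫ t in (0 : ℝ)..(2 * Real.pi), A.indicator (fun _ => (1 : ℝ)) (t + s) =
      volume.real ({t : ℝ | 0 ≤ Real.cos (t + s) ∧ 0 ≤ Real.cos (t + s - φ)} ∩
      Set.Ioc 0 (2 * Real.pi)) := by
    rw [intervalIntegral.integral_of_le (by linarith)]
    have hm : MeasurableSet ((fun t => t + s) ⁻¹' A) := (measurable_id.add_const s) hA
    have := integral_indicator_one (μ := volume.restrict (Set.Ioc 0 (2 * Real.pi))) hm
    rw [measureReal_restrict_apply hm] at this
    exact this
  have e2 : ∫ t in (-Real.pi)..(-Real.pi + 2 * Real.pi), A.indicator (fun _ => (1 : ℝ)) t =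
      Real.pi - φ := by
    rw [intervalIntegral.integral_of_le (by linarith)]
    have := integral_indicator_one
      (μ := volume.restrict (Set.Ioc (-Real.pi) (-Real.pi + 2 * Real.pi))) hA
    rw [measureReal_restrict_apply hA] at this
    refine this.trans ?_
    have hcos : ∀ t, -Real.pi < t → t ≤ Real.pi → (0 ≤ Real.cos t ↔
        -(Real.pi / 2) ≤ t ∧ t ≤ Real.pi / 2) := by
      intro t h1 h2
      constructor
      · intro h
        constructor
        · by_contra hc
          push Not at hc
          have := Real.cos_neg_of_pi_div_two_lt_of_lt (x := -t) (by linarith) (by linarith)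
          rw [Real.cos_neg] at this
          linarith
        · by_contra hc
          push Not at hc
          have := Real.cos_neg_of_pi_div_two_lt_of_lt (x := t) (by linarith) (by linarith)
          linarith
      · intro h
        exact Real.cos_nonneg_of_neg_pi_div_two_le_of_le h.1 h.2
    have hcos2 : ∀ t, -(Real.pi / 2) < t → t ≤ Real.pi / 2 → (0 ≤ Real.cos (t - φ) ↔
        φ - Real.pi / 2 ≤ t) := by
      intro t h1 h2
      constructor
      · intro h
        by_contra hc
        push Not at hc
        have := Real.cos_neg_of_pi_div_two_lt_of_lt (x := -(t - φ)) (by linarith) (by linarith)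
        rw [Real.cos_neg] at this
        linarith
      · intro h
        exact Real.cos_nonneg_of_neg_pi_div_two_le_of_le (by linarith) (by linarith)
    -- For `φ = π` the left side also contains the point `-π / 2`, hence only a.e. equality.
    have hset : (A ∩ Set.Ioc (-Real.pi) (-Real.pi + 2 * Real.pi) : Set ℝ) =ᵐ[volume]
        Set.Icc (φ - Real.pi / 2) (Real.pi / 2) := by
      rw [Filter.eventuallyEq_set]
      filter_upwards [(Set.countable_singleton (-(Real.pi / 2))).ae_notMem volume] with t ht
      have ht : t ≠ -(Real.pi / 2) := ht
      simp only [A, Set.mem_inter_iff, Set.mem_ofPred_eq, Set.mem_Ioc, Set.mem_Icc]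
      constructor
      · rintro ⟨⟨ha, hb⟩, hc, hd⟩
        have h1 := (hcos t hc (by linarith)).1 ha
        exact ⟨(hcos2 t (lt_of_le_of_ne h1.1 ht.symm) h1.2).1 hb, h1.2⟩
      · rintro ⟨ha, hb⟩
        refine ⟨⟨(hcos t (by linarith) (by linarith)).2 ⟨by linarith, hb⟩,
          (hcos2 t (lt_of_le_of_ne (by linarith) ht.symm) hb).2 ha⟩, by linarith, by linarith⟩
    rw [measureReal_congr hset, Real.volume_real_Icc_of_le (by linarith)]
    ring
  rw [e1, e2] at key
  rw [← key, Measure.real, ENNReal.ofReal_toReal]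
  refine ((measure_mono Set.inter_subset_right).trans_lt ?_).ne
  rw [Real.volume_Ioc]
  exact ENNReal.ofReal_lt_top

/-! ### Lunes and Girard's formula -/

/-- The axis of the rotations `rot t` meets the sphere in two points, hence in a null set. -/
theorem ae_off_axis : ∀ᵐ x ∂sphereMeasure, ¬ (x 0 = 0 ∧ x 1 = 0) := by
  have hfin : ({!₂[0, 0, 1], !₂[0, 0, -1]} : Set (EuclideanSpace ℝ (Fin 3))).Countable :=
    (Set.toFinite _).countable
  have hmem : ∀ᵐ x ∂sphereMeasure, x ∈ Metric.sphere (0 : EuclideanSpace ℝ (Fin 3)) 1 :=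
    ae_restrict_mem Metric.isClosed_sphere.measurableSet
  filter_upwards [hfin.ae_notMem sphereMeasure, hmem] with x hx hxs hx0
  apply hx
  have h : ‖x‖ = 1 := by simpa using hxs
  have h2 := EuclideanSpace.real_norm_sq_eq x
  rw [h, Fin.sum_univ_three, hx0.1, hx0.2] at h2
  have h3 : (x 2 - 1) * (x 2 + 1) = 0 := by linarith
  rcases mul_eq_zero.1 h3 with h4 | h4
  · left
    ext i; fin_cases i <;> simp [hx0.1, hx0.2]; linarith
  · right
    show x = _
    ext i; fin_cases i <;> simp [hx0.1, hx0.2]; linarith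

theorem isClosed_lune_std (φ : ℝ) : IsClosed {x : EuclideanSpace ℝ (Fin 3) |
    0 ≤ x 0 ∧ 0 ≤ Real.cos φ * x 0 + Real.sin φ * x 1} := by
  have h1 : IsClosed {x : EuclideanSpace ℝ (Fin 3) | 0 ≤ x 0} :=
    isClosed_le continuous_const (by fun_prop)
  have h2 : IsClosed {x : EuclideanSpace ℝ (Fin 3) |
      0 ≤ Real.cos φ * x 0 + Real.sin φ * x 1} :=
    isClosed_le continuous_const (by fun_prop)
  exact h1.inter h2

/-- Area of a lune in standard position. By invariance the area is the average over all
rotations, and Fubini's theorem turns this into the measure of the set of rotations bringing a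
given point into the lune, which does not depend on the point. -/
theorem lune_std (φ : ℝ) (h0 : 0 ≤ φ) (hπ : φ ≤ Real.pi) :
    sphereMeasure.real {x | 0 ≤ x 0 ∧ 0 ≤ Real.cos φ * x 0 + Real.sin φ * x 1} =
      sphereMeasure.real Set.univ / (2 * Real.pi) * (Real.pi - φ) := by
  have hpi := Real.pi_pos
  let A : Set (EuclideanSpace ℝ (Fin 3)) :=
    {x | 0 ≤ x 0 ∧ 0 ≤ Real.cos φ * x 0 + Real.sin φ * x 1}
  have hA : IsClosed A := isClosed_lune_std φ
  let ν : Measure ℝ := volume.restrict (Set.Ioc 0 (2 * Real.pi))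
  let T : Set (ℝ × EuclideanSpace ℝ (Fin 3)) := {p | rotFun p.1 p.2 ∈ A}
  have hT : MeasurableSet T := by
    have hc : Continuous (fun p : ℝ × EuclideanSpace ℝ (Fin 3) => rotFun p.1 p.2) := by
      unfold rotFun
      apply Continuous.comp (PiLp.continuous_toLp 2 _)
      apply continuous_pi
      intro i
      fin_cases i <;> simp <;> fun_prop
    exact (hA.preimage hc).measurableSet
  have k1 : (ν.prod sphereMeasure) T = ENNReal.ofReal (2 * Real.pi) * sphereMeasure A := by
    rw [Measure.prod_apply hT]
    have : ∀ t, sphereMeasure (Prod.mk t ⁻¹' T) = sphereMeasure A := fun t =>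
      sphereMeasure_preimage (rot t) hA.measurableSet
    simp only [this, lintegral_const, ν, Measure.restrict_apply_univ, Real.volume_Ioc, sub_zero]
    rw [mul_comm]
  have k2 : (ν.prod sphereMeasure) T =
      ENNReal.ofReal (Real.pi - φ) * sphereMeasure Set.univ := by
    rw [Measure.prod_apply_symm hT, ← lintegral_const]
    apply lintegral_congr_ae
    filter_upwards [ae_off_axis] with x hx
    have hm : MeasurableSet ((fun t => (t, x)) ⁻¹' T) := by
      exact (measurable_id.prodMk measurable_const) hT
    let z : ℂ := ⟨x 0, x 1⟩
    have hz : 0 < ‖z‖ := by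
      rw [norm_pos_iff]
      intro h
      exact hx ⟨congrArg Complex.re h, congrArg Complex.im h⟩
    have e0 : x 0 = ‖z‖ * Real.cos (Complex.arg z) := (Complex.norm_mul_cos_arg z).symm
    have e1 : x 1 = ‖z‖ * Real.sin (Complex.arg z) := (Complex.norm_mul_sin_arg z).symm
    rw [Measure.restrict_apply hm, ← volume_cos_nonneg φ h0 hπ (Complex.arg z)]
    congr 1
    ext t
    simp only [T, A, Set.mem_inter_iff, Set.mem_preimage, Set.mem_ofPred_eq, rotFun]
    have a1 : Real.cos t * x 0 - Real.sin t * x 1 = ‖z‖ * Real.cos (t + Complex.arg z) := by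
      rw [e0, e1, Real.cos_add]; ring
    have a2 : Real.cos φ * (Real.cos t * x 0 - Real.sin t * x 1) +
        Real.sin φ * (Real.sin t * x 0 + Real.cos t * x 1) =
        ‖z‖ * Real.cos (t + Complex.arg z - φ) := by
      rw [e0, e1, Real.cos_sub, Real.cos_add, Real.sin_add]; ring
    change (0 ≤ Real.cos t * x 0 - Real.sin t * x 1 ∧
      0 ≤ Real.cos φ * (Real.cos t * x 0 - Real.sin t * x 1) +
        Real.sin φ * (Real.sin t * x 0 + Real.cos t * x 1)) ∧ _ ↔ _
    rw [a2, a1, mul_nonneg_iff_of_pos_left hz, mul_nonneg_iff_of_pos_left hz]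
  rw [k1] at k2
  have k3 := congrArg ENNReal.toReal k2
  rw [ENNReal.toReal_mul, ENNReal.toReal_mul, ENNReal.toReal_ofReal (by linarith),
    ENNReal.toReal_ofReal (by linarith)] at k3
  change 2 * Real.pi * sphereMeasure.real A = _ * sphereMeasure.real Set.univ at k3
  change sphereMeasure.real A = _
  field_simp
  linarith

/-- Two unit vectors can be put in standard position by an orthonormal change of coordinates. -/
theorem exists_frame (m n : EuclideanSpace ℝ (Fin 3)) (hm : ‖m‖ = 1) (hn : ‖n‖ = 1) :
    ∃ b : OrthonormalBasis (Fin 3) ℝ (EuclideanSpace ℝ (Fin 3)), b 0 = m ∧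
      n = Real.cos (InnerProductGeometry.angle m n) • b 0 +
        Real.sin (InnerProductGeometry.angle m n) • b 1 := by
  set φ := InnerProductGeometry.angle m n with hφ
  have hcos : ⟪m, n⟫ = Real.cos φ := by
    rw [hφ, InnerProductGeometry.cos_angle, hm, hn]; simp
  have hmm : ⟪m, m⟫ = (1 : ℝ) := by rw [real_inner_self_eq_norm_sq, hm]; norm_num
  have hnn : ⟪n, n⟫ = (1 : ℝ) := by rw [real_inner_self_eq_norm_sq, hn]; norm_num
  have hcard : Module.finrank ℝ (EuclideanSpace ℝ (Fin 3)) = Fintype.card (Fin 3) := by simp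
  have hsq : ⟪n - Real.cos φ • m, n - Real.cos φ • m⟫ = Real.sin φ ^ 2 := by
    simp only [inner_sub_left, inner_sub_right, inner_smul_left, inner_smul_right, hmm, hnn,
      real_inner_comm m n, hcos]
    simp
    linear_combination - Real.sin_sq_add_cos_sq φ
  by_cases hs : Real.sin φ = 0
  · obtain ⟨b, hb⟩ := Orthonormal.exists_orthonormalBasis_extension_of_card_eq (𝕜 := ℝ) hcard
      (v := fun _ : Fin 3 => m) (s := {0}) (by
        rw [orthonormal_iff_ite]
        rintro ⟨i, hi⟩ ⟨j, hj⟩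
        simp only [Set.mem_singleton_iff] at hi hj
        subst hi; subst hj
        simp [hm])
    refine ⟨b, hb 0 rfl, ?_⟩
    rw [hb 0 rfl, hs, zero_smul, add_zero]
    rw [hs] at hsq
    have := inner_self_eq_zero (𝕜 := ℝ).1 (hsq.trans (by norm_num))
    exact sub_eq_zero.1 this
  · let w := (Real.sin φ)⁻¹ • (n - Real.cos φ • m)
    have hw : ⟪w, w⟫ = (1 : ℝ) := by
      simp only [w, real_inner_smul_left, real_inner_smul_right, hsq]
      field_simp
    have hwn : ‖w‖ = 1 := by
      rw [real_inner_self_eq_norm_sq] at hw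
      nlinarith [norm_nonneg w]
    have hmw : ⟪m, w⟫ = (0 : ℝ) := by
      simp only [w, real_inner_smul_right, inner_sub_right, hmm, hcos]
      ring
    have hwm : ⟪w, m⟫ = (0 : ℝ) := by rw [real_inner_comm]; exact hmw
    obtain ⟨b, hb⟩ := Orthonormal.exists_orthonormalBasis_extension_of_card_eq (𝕜 := ℝ) hcard
      (v := ![m, w, 0]) (s := {0, 1}) (by
        rw [orthonormal_iff_ite]
        rintro ⟨i, hi⟩ ⟨j, hj⟩
        simp only [Set.mem_insert_iff, Set.mem_singleton_iff] at hi hj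
        rcases hi with rfl | rfl <;> rcases hj with rfl | rfl <;> simp [hwn, hmw, hwm, hm])
    have h0 : b 0 = m := hb 0 (by simp)
    have h1 : b 1 = w := hb 1 (by simp)
    refine ⟨b, h0, ?_⟩
    rw [h0, h1]
    simp only [w]
    rw [smul_inv_smul₀ hs]
    abel

/-- Area of the lune cut out by two half-spaces with unit inner normals `m` and `n`. -/
theorem lune (m n : EuclideanSpace ℝ (Fin 3)) (hm : ‖m‖ = 1) (hn : ‖n‖ = 1) :
    sphereMeasure.real {x | 0 ≤ ⟪x, m⟫ ∧ 0 ≤ ⟪x, n⟫} =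
      sphereMeasure.real Set.univ / (2 * Real.pi) *
        (Real.pi - InnerProductGeometry.angle m n) := by
  obtain ⟨b, hb0, hb1⟩ := exists_frame m n hm hn
  set φ := InnerProductGeometry.angle m n with hφ
  rw [← lune_std φ (InnerProductGeometry.angle_nonneg _ _) (InnerProductGeometry.angle_le_pi _ _)]
  have hA : MeasurableSet {x : EuclideanSpace ℝ (Fin 3) |
      0 ≤ x 0 ∧ 0 ≤ Real.cos φ * x 0 + Real.sin φ * x 1} :=
    (isClosed_lune_std φ).measurableSet
  unfold Measure.real
  rw [← sphereMeasure_preimage b.repr hA]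
  congr 2
  ext x
  simp only [Set.mem_ofPred_eq, Set.mem_preimage, b.repr_apply_apply]
  rw [real_inner_comm x (b 0), real_inner_comm x (b 1), hb0]
  conv_lhs => rw [hb1]
  rw [inner_add_right, real_inner_smul_right, real_inner_smul_right, hb0]

/-- Girard's formula, in terms of the unit inner normals of the three sides. No independence of
the normals is needed. -/
theorem girard (n₁ n₂ n₃ : EuclideanSpace ℝ (Fin 3)) (h₁ : ‖n₁‖ = 1) (h₂ : ‖n₂‖ = 1)
    (h₃ : ‖n₃‖ = 1) :
    sphereMeasure.real {x | 0 ≤ ⟪x, n₁⟫ ∧ 0 ≤ ⟪x, n₂⟫ ∧ 0 ≤ ⟪x, n₃⟫} =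
      sphereMeasure.real Set.univ / (4 * Real.pi) * (2 * Real.pi -
        (InnerProductGeometry.angle n₁ n₂ + InnerProductGeometry.angle n₁ n₃ +
          InnerProductGeometry.angle n₂ n₃)) := by
  have hpi := Real.pi_pos
  let H : EuclideanSpace ℝ (Fin 3) → Set (EuclideanSpace ℝ (Fin 3)) := fun n => {x | 0 ≤ ⟪x, n⟫}
  have hH : ∀ n, MeasurableSet (H n) := fun n =>
    (isClosed_le continuous_const (by fun_prop)).measurableSet
  have hnull : ∀ n, ‖n‖ = 1 → ∀ᵐ x ∂sphereMeasure, ⟪x, n⟫ ≠ (0 : ℝ) := by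
    intro n hn
    have h := lune n (-n) hn (by rw [norm_neg, hn])
    rw [InnerProductGeometry.angle_self_neg_of_nonzero (by rw [← norm_ne_zero_iff, hn]; simp),
      sub_self, mul_zero, measureReal_eq_zero_iff] at h
    rw [ae_iff]
    refine measure_mono_null ?_ h
    intro x hx
    simp only [Set.mem_ofPred_eq, not_not] at hx ⊢
    rw [inner_neg_right, hx]
    simp
  have half : ∀ n, ‖n‖ = 1 → sphereMeasure.real (H n) = sphereMeasure.real Set.univ / 2 := by
    intro n hn
    have h := lune n n hn hn
    rw [InnerProductGeometry.angle_self (by rw [← norm_ne_zero_iff, hn]; simp), sub_zero] at h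
    simp only [and_self] at h
    change sphereMeasure.real (H n) = _ at h
    rw [h]; field_simp
  have two : ∀ m n, ‖m‖ = 1 → ‖n‖ = 1 → sphereMeasure.real (H m ∩ H n) =
      sphereMeasure.real Set.univ / (2 * Real.pi) *
        (Real.pi - InnerProductGeometry.angle m n) := fun m n hm hn => lune m n hm hn
  have i1 := measureReal_union_add_inter (μ := sphereMeasure) (s := H n₁) (hH n₂)
  have i2 := measureReal_union_add_inter (μ := sphereMeasure) (s := H n₁ ∪ H n₂) (hH n₃)
  have i3 := measureReal_union_add_inter (μ := sphereMeasure) (s := H n₁ ∩ H n₃)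
    ((hH n₂).inter (hH n₃))
  rw [← Set.union_inter_distrib_right] at i3
  have e : (H n₁ ∩ H n₃) ∩ (H n₂ ∩ H n₃) = H n₁ ∩ (H n₂ ∩ H n₃) := by
    ext x; simp only [Set.mem_inter_iff]; tauto
  rw [e] at i3
  have i4 := measureReal_add_measureReal_compl (μ := sphereMeasure)
    (((hH n₁).union (hH n₂)).union (hH n₃))
  -- The complement of the union is, up to a null set, the antipodal image of the triangle.
  have i5 : sphereMeasure.real ((H n₁ ∪ H n₂ ∪ H n₃)ᶜ) =
      sphereMeasure.real (H n₁ ∩ (H n₂ ∩ H n₃)) := by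
    have hM : MeasurableSet (H n₁ ∩ (H n₂ ∩ H n₃)) := (hH n₁).inter ((hH n₂).inter (hH n₃))
    have := sphereMeasure_preimage (LinearIsometryEquiv.neg ℝ) hM
    unfold Measure.real
    rw [← this]
    congr 1
    apply measure_congr
    rw [Filter.eventuallyEq_set]
    filter_upwards [hnull n₁ h₁, hnull n₂ h₂, hnull n₃ h₃] with x k1 k2 k3
    simp only [H, Set.mem_compl_iff, Set.mem_union, Set.mem_ofPred_eq, Set.mem_preimage,
      Set.mem_inter_iff, LinearIsometryEquiv.coe_neg, inner_neg_left, not_or, not_le,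
      Left.nonneg_neg_iff, and_assoc]
    exact ⟨fun h => ⟨h.1.le, h.2.1.le, h.2.2.le⟩, fun h => ⟨lt_of_le_of_ne h.1 k1,
      lt_of_le_of_ne h.2.1 k2, lt_of_le_of_ne h.2.2 k3⟩⟩
  rw [two _ _ h₁ h₂, half _ h₁, half _ h₂] at i1
  rw [half _ h₃] at i2
  rw [two _ _ h₁ h₃, two _ _ h₂ h₃] at i3
  change sphereMeasure.real (H n₁ ∩ (H n₂ ∩ H n₃)) = _
  have hk : sphereMeasure.real Set.univ =
      sphereMeasure.real Set.univ / (2 * Real.pi) * (2 * Real.pi) := by field_simp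
  have hk2 : sphereMeasure.real Set.univ / (4 * Real.pi) =
      sphereMeasure.real Set.univ / (2 * Real.pi) / 2 := by field_simp; norm_num
  rw [hk2]
  generalize sphereMeasure.real Set.univ / (2 * Real.pi) = κ at *
  rw [hk] at i1 i2 i4
  linear_combination (-i1 - i2 + i3 + i4 - i5) / 2

/-! ### Trigonometric inequalities -/

/-- If `x`, `y`, `z`, `t` are the tangents of angles with `X + Y + Z = 3T < π / 2`, then
`x * y * z ≤ t ^ 3`: the hypothesis `h` says `tan (X + Y + Z) = tan (3T)`. -/
theorem mul_le_cube_of_tan {x y z t : ℝ} (hx : 0 ≤ x) (hy : 0 ≤ y) (hz : 0 ≤ z) (ht : 0 ≤ t)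
    (h1 : 0 < 1 - (x * y + y * z + z * x)) (h2 : 0 < 1 - 3 * t ^ 2)
    (h : (x + y + z - x * y * z) * (1 - 3 * t ^ 2) =
      (3 * t - t ^ 3) * (1 - (x * y + y * z + z * x))) :
    x * y * z ≤ t ^ 3 := by
  by_contra hc
  push Not at hc
  have hxy := mul_nonneg hx hy
  have hyz := mul_nonneg hy hz
  have hzx := mul_nonneg hz hx
  -- By the inequality of means, both other symmetric functions exceed their values at `t`.
  have a1 : 3 * t < x + y + z := by
    have : (3 * t) ^ 3 < (x + y + z) ^ 3 := by
      nlinarith [mul_nonneg hx (sq_nonneg (y - z)), mul_nonneg hy (sq_nonneg (z - x)),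
        mul_nonneg hz (sq_nonneg (x - y)), mul_nonneg hx (sq_nonneg (x - y)),
        mul_nonneg hx (sq_nonneg (x - z)), mul_nonneg hy (sq_nonneg (y - z)),
        mul_nonneg hy (sq_nonneg (y - x)), mul_nonneg hz (sq_nonneg (z - y)),
        mul_nonneg hz (sq_nonneg (z - x))]
    exact lt_of_pow_lt_pow_left₀ 3 (by positivity) this
  have a2 : 3 * t ^ 2 < x * y + y * z + z * x := by
    have hsq : (t ^ 3) ^ 2 < (x * y * z) ^ 2 := by gcongr
    have : (3 * t ^ 2) ^ 3 < (x * y + y * z + z * x) ^ 3 := by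
      have e : (x * y * z) ^ 2 = (x * y) * (y * z) * (z * x) := by ring
      rw [e] at hsq
      generalize x * y = p at *
      generalize y * z = q at *
      generalize z * x = r at *
      nlinarith [mul_nonneg hxy (sq_nonneg (q - r)), mul_nonneg hyz (sq_nonneg (r - p)),
        mul_nonneg hzx (sq_nonneg (p - q)), mul_nonneg hxy (sq_nonneg (p - q)),
        mul_nonneg hxy (sq_nonneg (p - r)), mul_nonneg hyz (sq_nonneg (q - r)),
        mul_nonneg hyz (sq_nonneg (q - p)), mul_nonneg hzx (sq_nonneg (r - q)),
        mul_nonneg hzx (sq_nonneg (r - p))]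
    exact lt_of_pow_lt_pow_left₀ 3 (by positivity) this
  have a3 : 9 * (x * y * z) ≤ (x + y + z) * (x * y + y * z + z * x) := by
    nlinarith [mul_nonneg hx (sq_nonneg (y - z)), mul_nonneg hy (sq_nonneg (z - x)),
        mul_nonneg hz (sq_nonneg (x - y))]
  generalize x * y * z = e3 at *
  generalize x * y + y * z + z * x = e2 at *
  generalize x + y + z = e1 at *
  -- `e1 * (1 - e2 / 9) ≤ e1 - e3`, while `(1 - e2) / (1 - e2 / 9)` is decreasing in `e2`.
  have b1 : e1 * (1 - e2 / 9) * (1 - 3 * t ^ 2) ≤ (3 * t - t ^ 3) * (1 - e2) := by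
    rw [← h]
    apply mul_le_mul_of_nonneg_right _ h2.le
    linarith
  have b2 : 3 * t * (1 - e2 / 9) * (1 - 3 * t ^ 2) < e1 * (1 - e2 / 9) * (1 - 3 * t ^ 2) := by
    apply mul_lt_mul_of_pos_right _ h2
    apply mul_lt_mul_of_pos_right a1
    linarith
  nlinarith [mul_nonneg ht (sub_nonneg.2 a2.le)]

/-- For a triangle with half-sides `Y + Z`, `X + Z`, `X + Y`, this identity and the next compute the
difference and the sum of the denominator and the numerator of the formula for `cos (E / 2)`; their
quotient is L'Huilier's formula for `tan (E / 4) ^ 2`. -/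
theorem sub_identity (X Y Z : ℝ) :
    4 * Real.cos (Y + Z) * Real.cos (X + Z) * Real.cos (X + Y) -
      (1 + Real.cos (2 * (Y + Z)) + Real.cos (2 * (X + Z)) + Real.cos (2 * (X + Y))) =
    8 * Real.sin (X + Y + Z) * (Real.sin X * Real.sin Y * Real.sin Z) := by
  simp only [Real.cos_two_mul, Real.cos_add, Real.sin_add]
  have hX := Real.sin_sq_add_cos_sq X
  have hY := Real.sin_sq_add_cos_sq Y
  have hZ := Real.sin_sq_add_cos_sq Z
  grind

theorem add_identity (X Y Z : ℝ) :
    4 * Real.cos (Y + Z) * Real.cos (X + Z) * Real.cos (X + Y) +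
      (1 + Real.cos (2 * (Y + Z)) + Real.cos (2 * (X + Z)) + Real.cos (2 * (X + Y))) =
    8 * Real.cos (X + Y + Z) * (Real.cos X * Real.cos Y * Real.cos Z) := by
  simp only [Real.cos_two_mul, Real.cos_add, Real.sin_add]
  have hX := Real.sin_sq_add_cos_sq X
  have hY := Real.sin_sq_add_cos_sq Y
  have hZ := Real.sin_sq_add_cos_sq Z
  grind

/-- Among `X, Y, Z ≥ 0` with given sum less than `π / 2`, the product of the tangents is largest when
all three are equal. -/
theorem sin_prod_le {X Y Z T : ℝ} (hX : 0 ≤ X) (hY : 0 ≤ Y) (hZ : 0 ≤ Z)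
    (hT : X + Y + Z = 3 * T) (hlt : 3 * T < Real.pi / 2) :
    Real.sin X * Real.sin Y * Real.sin Z * Real.cos T ^ 3 ≤
      Real.sin T ^ 3 * (Real.cos X * Real.cos Y * Real.cos Z) := by
  have hpi := Real.pi_pos
  have cX : 0 < Real.cos X := Real.cos_pos_of_mem_Ioo ⟨by linarith, by linarith⟩
  have cY : 0 < Real.cos Y := Real.cos_pos_of_mem_Ioo ⟨by linarith, by linarith⟩
  have cZ : 0 < Real.cos Z := Real.cos_pos_of_mem_Ioo ⟨by linarith, by linarith⟩
  have cT : 0 < Real.cos T := Real.cos_pos_of_mem_Ioo ⟨by linarith, by linarith⟩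
  have c3 : 0 < Real.cos (3 * T) := Real.cos_pos_of_mem_Ioo ⟨by linarith, by linarith⟩
  have tX : 0 ≤ Real.tan X := Real.tan_nonneg_of_nonneg_of_le_pi_div_two hX (by linarith)
  have tY : 0 ≤ Real.tan Y := Real.tan_nonneg_of_nonneg_of_le_pi_div_two hY (by linarith)
  have tZ : 0 ≤ Real.tan Z := Real.tan_nonneg_of_nonneg_of_le_pi_div_two hZ (by linarith)
  have tT : 0 ≤ Real.tan T := Real.tan_nonneg_of_nonneg_of_le_pi_div_two (by linarith) (by linarith)
  have sX := Real.tan_mul_cos cX.ne'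
  have sY := Real.tan_mul_cos cY.ne'
  have sZ := Real.tan_mul_cos cZ.ne'
  have sT := Real.tan_mul_cos cT.ne'
  have cos_sum : ∀ A B C : ℝ, Real.cos (A + B + C) = Real.cos A * Real.cos B * Real.cos C -
      Real.sin A * Real.sin B * Real.cos C - Real.sin B * Real.sin C * Real.cos A -
      Real.sin C * Real.sin A * Real.cos B := by
    intro A B C; simp only [Real.cos_add, Real.sin_add]; ring
  have sin_sum : ∀ A B C : ℝ, Real.sin (A + B + C) = Real.sin A * Real.cos B * Real.cos C +
      Real.cos A * Real.sin B * Real.cos C + Real.cos A * Real.cos B * Real.sin C -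
      Real.sin A * Real.sin B * Real.sin C := by
    intro A B C; simp only [Real.cos_add, Real.sin_add]; ring
  have e1 := cos_sum X Y Z
  have e2 := sin_sum X Y Z
  have e3 := cos_sum T T T
  have e4 := sin_sum T T T
  rw [show T + T + T = 3 * T by ring] at e3 e4
  rw [hT] at e1 e2
  rw [← sX, ← sY, ← sZ] at e1 e2 ⊢
  rw [← sT] at e3 e4 ⊢
  have f1 : Real.cos (3 * T) = (Real.cos X * Real.cos Y * Real.cos Z) *
      (1 - (Real.tan X * Real.tan Y + Real.tan Y * Real.tan Z + Real.tan Z * Real.tan X)) := by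
    rw [e1]; ring
  have f2 : Real.sin (3 * T) = (Real.cos X * Real.cos Y * Real.cos Z) *
      (Real.tan X + Real.tan Y + Real.tan Z - Real.tan X * Real.tan Y * Real.tan Z) := by
    rw [e2]; ring
  have f3 : Real.cos (3 * T) = Real.cos T ^ 3 * (1 - 3 * Real.tan T ^ 2) := by
    rw [e3]; ring
  have f4 : Real.sin (3 * T) = Real.cos T ^ 3 * (3 * Real.tan T - Real.tan T ^ 3) := by
    rw [e4]; ring
  have P : 0 < Real.cos X * Real.cos Y * Real.cos Z := by positivity
  have Q : 0 < Real.cos T ^ 3 := by positivity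
  generalize hp : Real.cos X * Real.cos Y * Real.cos Z = p at *
  have key := mul_le_cube_of_tan tX tY tZ tT (pos_of_mul_pos_right (f1 ▸ c3) P.le)
    (pos_of_mul_pos_right (f3 ▸ c3) Q.le) (by
      have h : (p * Real.cos T ^ 3) * ((Real.tan X + Real.tan Y + Real.tan Z -
          Real.tan X * Real.tan Y * Real.tan Z) * (1 - 3 * Real.tan T ^ 2)) =
          (p * Real.cos T ^ 3) * ((3 * Real.tan T - Real.tan T ^ 3) *
          (1 - (Real.tan X * Real.tan Y + Real.tan Y * Real.tan Z + Real.tan Z * Real.tan X))) := by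
        linear_combination Real.sin (3 * T) * (f1 - f3) + Real.cos T ^ 3 *
          (1 - 3 * Real.tan T ^ 2) * (-f2) + p * (1 - (Real.tan X * Real.tan Y +
          Real.tan Y * Real.tan Z + Real.tan Z * Real.tan X)) * f4
      exact mul_left_cancel₀ (by positivity) h)
  calc _ = p * Real.cos T ^ 3 * (Real.tan X * Real.tan Y * Real.tan Z) := by rw [← hp]; ring
    _ ≤ p * Real.cos T ^ 3 * Real.tan T ^ 3 := mul_le_mul_of_nonneg_left key (by positivity)
    _ = _ := by ring

/-- For a spherical triangle with sides `a`, `b`, `c` and area `E` on the unit sphere, the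
quotient `(1 + cos a + cos b + cos c) / (4 cos (a/2) cos (b/2) cos (c/2))` is `cos (E / 2)`. For
fixed perimeter `3 * s` it is smallest when all sides equal `s`. -/
theorem quotient_le {a b c s : ℝ} (hX : a ≤ b + c) (hY : b ≤ a + c) (hZ : c ≤ a + b)
    (hs : a + b + c = 3 * s) (hlt : 3 * s < 2 * Real.pi) :
    (1 + Real.cos s + Real.cos s + Real.cos s) *
        (4 * Real.cos (a / 2) * Real.cos (b / 2) * Real.cos (c / 2)) ≤
      (1 + Real.cos a + Real.cos b + Real.cos c) *
        (4 * Real.cos (s / 2) * Real.cos (s / 2) * Real.cos (s / 2)) := by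
  -- Substitute `a / 2 = Y + Z`, `b / 2 = X + Z`, `c / 2 = X + Y`.
  have i1 := sub_identity ((b + c - a) / 4) ((a + c - b) / 4) ((a + b - c) / 4)
  have i2 := add_identity ((b + c - a) / 4) ((a + c - b) / 4) ((a + b - c) / 4)
  have j1 := sub_identity (s / 4) (s / 4) (s / 4)
  have j2 := add_identity (s / 4) (s / 4) (s / 4)
  have k := sin_prod_le (X := (b + c - a) / 4) (Y := (a + c - b) / 4) (Z := (a + b - c) / 4)
    (T := s / 4) (by linarith) (by linarith) (by linarith) (by linarith) (by linarith)
  have r1 : (a + c - b) / 4 + (a + b - c) / 4 = a / 2 := by ring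
  have r2 : (b + c - a) / 4 + (a + b - c) / 4 = b / 2 := by ring
  have r3 : (b + c - a) / 4 + (a + c - b) / 4 = c / 2 := by ring
  have r4 : c / 2 + (a + b - c) / 4 = 3 * (s / 4) := by linarith
  have r5 : s / 4 + s / 4 = s / 2 := by ring
  have r6 : s / 2 + s / 4 = 3 * (s / 4) := by ring
  simp only [r1, r2, r3, r4, r5, r6, mul_div_cancel₀ _ (two_ne_zero' ℝ)] at i1 i2 j1 j2
  have hS : 0 ≤ Real.sin (3 * (s / 4)) :=
    Real.sin_nonneg_of_nonneg_of_le_pi (by linarith) (by linarith)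
  have hC : 0 ≤ Real.cos (3 * (s / 4)) :=
    Real.cos_nonneg_of_neg_pi_div_two_le_of_le (by linarith) (by linarith)
  have kk := mul_le_mul_of_nonneg_left k (mul_nonneg hS hC)
  have m1 := congrArg₂ (· * ·) i1 j2
  have m2 := congrArg₂ (· * ·) i2 j1
  linarith [kk, m1, m2]

theorem cos_sum_mul {α β γ P Q R A B C d : ℝ} (hα : Real.cos α * P = A)
    (hβ : Real.cos β * Q = B) (hγ : Real.cos γ * R = C) (sα : Real.sin α * P = d)
    (sβ : Real.sin β * Q = d) (sγ : Real.sin γ * R = d) :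
    Real.cos (α + β + γ) * (P * Q * R) = A * B * C - d ^ 2 * (A + B + C) := by
  calc _ = (Real.cos α * P) * (Real.cos β * Q) * (Real.cos γ * R) -
        (Real.sin α * P) * (Real.sin β * Q) * (Real.cos γ * R) -
        (Real.sin α * P) * (Real.cos β * Q) * (Real.sin γ * R) -
        (Real.cos α * P) * (Real.sin β * Q) * (Real.sin γ * R) := by
        rw [Real.cos_add, Real.cos_add, Real.sin_add]; ring
    _ = _ := by rw [hα, hβ, hγ, sα, sβ, sγ]; ring

theorem sin_sum_mul {α β γ P Q R A B C d : ℝ} (hα : Real.cos α * P = A)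
    (hβ : Real.cos β * Q = B) (hγ : Real.cos γ * R = C) (sα : Real.sin α * P = d)
    (sβ : Real.sin β * Q = d) (sγ : Real.sin γ * R = d) :
    Real.sin (α + β + γ) * (P * Q * R) = d * (A * B + B * C + C * A) - d ^ 3 := by
  calc _ = (Real.sin α * P) * (Real.cos β * Q) * (Real.cos γ * R) +
        (Real.cos α * P) * (Real.sin β * Q) * (Real.cos γ * R) +
        (Real.cos α * P) * (Real.cos β * Q) * (Real.sin γ * R) -
        (Real.sin α * P) * (Real.sin β * Q) * (Real.sin γ * R) := by
        rw [Real.sin_add, Real.sin_add, Real.cos_add]; ring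
    _ = _ := by rw [hα, hβ, hγ, sα, sβ, sγ]; ring

/-- The spherical excess `E = 2π - (α + β + γ)` in terms of the sides: with `x`, `y`, `z` the
cosines of the sides and `α`, `β`, `γ` the exterior angles,
`cos (E / 2) = (1 + x + y + z) / √(2 (1 + x) (1 + y) (1 + z))`. -/
theorem cos_half_excess {x y z α β γ M : ℝ} (hx : x ^ 2 < 1) (hy : y ^ 2 < 1) (hz : z ^ 2 < 1)
    (hD : 0 < 1 + 2 * x * y * z - x ^ 2 - y ^ 2 - z ^ 2)
    (hα0 : 0 ≤ α) (hα1 : α ≤ Real.pi) (hβ0 : 0 ≤ β) (hβ1 : β ≤ Real.pi)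
    (hγ0 : 0 ≤ γ) (hγ1 : γ ≤ Real.pi)
    (hα : Real.cos α * (√(1 - x ^ 2) * √(1 - y ^ 2)) = x * y - z)
    (hβ : Real.cos β * (√(1 - x ^ 2) * √(1 - z ^ 2)) = x * z - y)
    (hγ : Real.cos γ * (√(1 - y ^ 2) * √(1 - z ^ 2)) = y * z - x)
    (hsum : α + β + γ ≤ 2 * Real.pi) (hM : 0 < M)
    (hM2 : M ^ 2 = 2 * (1 + x) * (1 + y) * (1 + z)) :
    M * Real.cos ((2 * Real.pi - (α + β + γ)) / 2) = 1 + x + y + z := by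
  have hpi := Real.pi_pos
  set D := 1 + 2 * x * y * z - x ^ 2 - y ^ 2 - z ^ 2 with hDdef
  have hp : 0 < √(1 - x ^ 2) := Real.sqrt_pos.2 (by linarith)
  have hq : 0 < √(1 - y ^ 2) := Real.sqrt_pos.2 (by linarith)
  have hr : 0 < √(1 - z ^ 2) := Real.sqrt_pos.2 (by linarith)
  have hp2 : √(1 - x ^ 2) ^ 2 = 1 - x ^ 2 := Real.sq_sqrt (by linarith)
  have hq2 : √(1 - y ^ 2) ^ 2 = 1 - y ^ 2 := Real.sq_sqrt (by linarith)
  have hr2 : √(1 - z ^ 2) ^ 2 = 1 - z ^ 2 := Real.sq_sqrt (by linarith)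
  have hd : 0 < √D := Real.sqrt_pos.2 hD
  have hd2 : √D ^ 2 = D := Real.sq_sqrt hD.le
  generalize √(1 - x ^ 2) = p at *
  generalize √(1 - y ^ 2) = q at *
  generalize √(1 - z ^ 2) = r at *
  generalize √D = d at *
  have hsin : ∀ (φ P v : ℝ), 0 ≤ φ → φ ≤ Real.pi → 0 < P → Real.cos φ * P = v →
      P ^ 2 - v ^ 2 = D → Real.sin φ * P = d := by
    intro φ P v h0 h1 hP hv hPv
    have hs := Real.sin_nonneg_of_nonneg_of_le_pi h0 h1
    have : (Real.sin φ * P) ^ 2 = d ^ 2 := by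
      rw [hd2, ← hPv, ← hv]
      linear_combination P ^ 2 * Real.sin_sq_add_cos_sq φ
    rwa [sq_eq_sq₀ (by positivity) hd.le] at this
  have sα := hsin α _ _ hα0 hα1 (by positivity) hα (by rw [mul_pow, hp2, hq2, hDdef]; ring)
  have sβ := hsin β _ _ hβ0 hβ1 (by positivity) hβ (by rw [mul_pow, hp2, hr2, hDdef]; ring)
  have sγ := hsin γ _ _ hγ0 hγ1 (by positivity) hγ (by rw [mul_pow, hq2, hr2, hDdef]; ring)
  have hppp : (p * q * r) ^ 2 = (1 - x ^ 2) * (1 - y ^ 2) * (1 - z ^ 2) := by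
    rw [← hp2, ← hq2, ← hr2]; ring
  have hone : ∀ v : ℝ, v ^ 2 < 1 → 0 < 1 - v ∧ 0 < 1 + v := by
    intro v hv
    have := abs_lt.1 ((sq_lt_one_iff_abs_lt_one v).1 hv)
    constructor <;> linarith
  have hx1 := hone x hx
  have hy1 := hone y hy
  have hz1 := hone z hz
  have hK : 0 < (1 - x) * (1 - y) * (1 - z) / 2 :=
    div_pos (mul_pos (mul_pos hx1.1 hy1.1) hz1.1) two_pos
  have hppp2 : (p * q * r) ^ 2 = (1 - x) * (1 - y) * (1 - z) / 2 * M ^ 2 := by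
    rw [hppp, hM2]; ring
  set N := 1 + x + y + z with hN
  have hprod : (p * q * r) ^ 2 = p * q * (p * r) * (q * r) := by ring
  -- The product of the numbers `P * exp (i φ)` for the three exterior angles is a positive
  -- multiple of the square of `N - i d`.
  have c1 : Real.cos (α + β + γ) * (p * q * r) ^ 2 =
      (1 - x) * (1 - y) * (1 - z) / 2 * (N ^ 2 - D) := by
    rw [hprod, cos_sum_mul hα hβ hγ sα sβ sγ, hd2, hDdef, hN]; ring
  have s1 : Real.sin (α + β + γ) * (p * q * r) ^ 2 =
      -(1 - x) * (1 - y) * (1 - z) * (N * d) := by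
    rw [hprod, sin_sum_mul hα hβ hγ sα sβ sγ, pow_succ d 2, hd2, hDdef, hN]; ring
  set h := (2 * Real.pi - (α + β + γ)) / 2 with hh
  have hsum2 : α + β + γ = 2 * Real.pi - 2 * h := by rw [hh]; ring
  rw [hsum2] at c1 s1
  rw [Real.cos_two_pi_sub, Real.cos_two_mul, hppp2] at c1
  rw [Real.sin_two_pi_sub, Real.sin_two_mul, hppp2] at s1
  have hsh : 0 ≤ Real.sin h :=
    Real.sin_nonneg_of_nonneg_of_le_pi (by linarith) (by linarith)
  have hND : N ^ 2 + D = M ^ 2 := by rw [hM2, hN, hDdef]; ring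
  have c2 : (M * Real.cos h) ^ 2 = N ^ 2 := by
    have := mul_left_cancel₀ hK.ne' (show (1 - x) * (1 - y) * (1 - z) / 2 *
      (M ^ 2 * (2 * Real.cos h ^ 2 - 1)) = (1 - x) * (1 - y) * (1 - z) / 2 * (N ^ 2 - D) by
      rw [← c1]; ring)
    linear_combination (this - hND) / 2
  have s2 : (M * Real.sin h) * (M * Real.cos h) = N * d := by
    have := mul_left_cancel₀ hK.ne' (show (1 - x) * (1 - y) * (1 - z) / 2 *
      (M ^ 2 * (2 * Real.sin h * Real.cos h)) = (1 - x) * (1 - y) * (1 - z) / 2 * (2 * (N * d)) by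
      linear_combination -s1)
    linear_combination this / 2
  rcases sq_eq_sq_iff_eq_or_eq_neg.1 c2 with h1 | h1
  · exact h1
  · rw [h1] at s2
    have h3 : N * (M * Real.sin h + d) = 0 := by linear_combination -s2
    rcases mul_eq_zero.1 h3 with h4 | h4
    · rw [h1, h4, neg_zero]
    · linarith [mul_nonneg hM.le hsh]

/-! ### Areas of a triangle and of its polar -/

theorem sphereMeasure_apply (s : Set (EuclideanSpace ℝ (Fin 3))) :
    sphereMeasure s = μH[2] (s ∩ Metric.sphere (0 : EuclideanSpace ℝ (Fin 3)) 1) :=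
  Measure.restrict_apply' Metric.isClosed_sphere.measurableSet

theorem polarCone_coneGen (u : Fin 3 → EuclideanSpace ℝ (Fin 3)) :
    polarCone (coneGen u) = {x | 0 ≤ ⟪x, -u 0⟫ ∧ 0 ≤ ⟪x, -u 1⟫ ∧ 0 ≤ ⟪x, -u 2⟫} := by
  ext y
  simp only [polarCone, coneGen, Set.mem_ofPred_eq, inner_neg_right, Left.nonneg_neg_iff]
  constructor
  · intro h
    have hi : ∀ i, ⟪y, u i⟫ ≤ (0 : ℝ) := fun i => h (u i) ⟨Pi.single i 1, fun j => by
      by_cases hj : j = i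
      · subst hj; simp
      · simp [hj], by simp [Pi.single_apply]⟩
    exact ⟨hi 0, hi 1, hi 2⟩
  · rintro ⟨h0, h1, h2⟩ x ⟨c, hc, rfl⟩
    simp only [Fin.sum_univ_three, inner_add_right, real_inner_smul_right]
    have := mul_nonneg (hc 0) (neg_nonneg.2 h0)
    have := mul_nonneg (hc 1) (neg_nonneg.2 h1)
    have := mul_nonneg (hc 2) (neg_nonneg.2 h2)
    linarith

/-- The area of the polar is determined by the perimeter of the triangle. -/
theorem polar_area (u : Fin 3 → EuclideanSpace ℝ (Fin 3)) (hu : ∀ i, ‖u i‖ = 1) :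
    sphereMeasure.real (polarCone (coneGen u)) =
      sphereMeasure.real Set.univ / (4 * Real.pi) * (2 * Real.pi -
        (InnerProductGeometry.angle (u 0) (u 1) + InnerProductGeometry.angle (u 0) (u 2) +
          InnerProductGeometry.angle (u 1) (u 2))) := by
  rw [polarCone_coneGen, girard _ _ _ (by rw [norm_neg, hu]) (by rw [norm_neg, hu])
    (by rw [norm_neg, hu])]
  simp only [InnerProductGeometry.angle_neg_neg]

theorem sq_inner_lt_one {u v : EuclideanSpace ℝ (Fin 3)} (hu : ‖u‖ = 1) (hv : ‖v‖ = 1)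
    (h : ∀ a : ℝ, u - a • v ≠ 0) : (⟪u, v⟫ : ℝ) ^ 2 < 1 := by
  have h1 := real_inner_self_nonneg.lt_of_ne' (fun h0 => h ⟪u, v⟫ (inner_self_eq_zero (𝕜 := ℝ).1 h0))
  have hu' : ⟪u, u⟫ = (1 : ℝ) := by rw [real_inner_self_eq_norm_sq, hu]; norm_num
  have hv' : ⟪v, v⟫ = (1 : ℝ) := by rw [real_inner_self_eq_norm_sq, hv]; norm_num
  simp only [inner_sub_left, inner_sub_right, real_inner_smul_left, real_inner_smul_right, hu', hv',
    real_inner_comm u v] at h1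
  nlinarith

/-- Area of a nondegenerate spherical triangle in terms of its sides `a`, `b`, `c`. The normals
of its three sides are obtained from the cofactor matrix of the Gram matrix of the vertices. -/
theorem triangle_area (u : Fin 3 → EuclideanSpace ℝ (Fin 3)) (hli : LinearIndependent ℝ u)
    (hu : ∀ i, ‖u i‖ = 1) {a b c : ℝ} (ha : a = InnerProductGeometry.angle (u 1) (u 2))
    (hb : b = InnerProductGeometry.angle (u 0) (u 2))
    (hc : c = InnerProductGeometry.angle (u 0) (u 1)) :
    ∃ E : ℝ, 0 ≤ E ∧ E ≤ 2 * Real.pi ∧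
      sphereMeasure.real (coneGen u) = sphereMeasure.real Set.univ / (4 * Real.pi) * E ∧
      0 < 4 * Real.cos (a / 2) * Real.cos (b / 2) * Real.cos (c / 2) ∧
      4 * Real.cos (a / 2) * Real.cos (b / 2) * Real.cos (c / 2) * Real.cos (E / 2) =
        1 + Real.cos a + Real.cos b + Real.cos c := by
  have huu : ∀ i, ⟪u i, u i⟫ = (1 : ℝ) := fun i => by
    rw [real_inner_self_eq_norm_sq, hu]; norm_num
  have hli' := Fintype.linearIndependent_iff.1 hli
  have hlin : ∀ p q r : ℝ, p • u 0 + q • u 1 + r • u 2 = 0 → p = 0 ∧ q = 0 ∧ r = 0 := by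
    intro p q r h
    have := hli' ![p, q, r] (by simpa [Fin.sum_univ_three] using h)
    exact ⟨this 0, this 1, this 2⟩
  have hcosang : ∀ i j, Real.cos (InnerProductGeometry.angle (u i) (u j)) = ⟪u i, u j⟫ := by
    intro i j; rw [InnerProductGeometry.cos_angle, hu, hu]; simp
  have hx : (⟪u 1, u 2⟫ : ℝ) ^ 2 < 1 := sq_inner_lt_one (hu 1) (hu 2) (fun t ht => by
    have := hlin 0 1 (-t) (by rw [← ht]; module)
    simp at this)
  have hy : (⟪u 0, u 2⟫ : ℝ) ^ 2 < 1 := sq_inner_lt_one (hu 0) (hu 2) (fun t ht => by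
    have := hlin 1 0 (-t) (by rw [← ht]; module)
    simp at this)
  have hz : (⟪u 0, u 1⟫ : ℝ) ^ 2 < 1 := sq_inner_lt_one (hu 0) (hu 1) (fun t ht => by
    have := hlin 1 (-t) 0 (by rw [← ht]; module)
    simp at this)
  have cx := hcosang 1 2
  have cy := hcosang 0 2
  have cz := hcosang 0 1
  rw [← ha] at cx
  rw [← hb] at cy
  rw [← hc] at cz
  have x' : ⟪u 2, u 1⟫ = (⟪u 1, u 2⟫ : ℝ) := real_inner_comm _ _
  have y' : ⟪u 2, u 0⟫ = (⟪u 0, u 2⟫ : ℝ) := real_inner_comm _ _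
  have z' : ⟪u 1, u 0⟫ = (⟪u 0, u 1⟫ : ℝ) := real_inner_comm _ _
  generalize hxe : (⟪u 1, u 2⟫ : ℝ) = x at *
  generalize hye : (⟪u 0, u 2⟫ : ℝ) = y at *
  generalize hze : (⟪u 0, u 1⟫ : ℝ) = z at *
  let n₀ := (1 - x ^ 2) • u 0 + (x * y - z) • u 1 + (x * z - y) • u 2
  let n₁ := (x * y - z) • u 0 + (1 - y ^ 2) • u 1 + (y * z - x) • u 2
  let n₂ := (x * z - y) • u 0 + (y * z - x) • u 1 + (1 - z ^ 2) • u 2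
  obtain ⟨D, hD⟩ : ∃ D, D = 1 + 2 * x * y * z - x ^ 2 - y ^ 2 - z ^ 2 := ⟨_, rfl⟩
  have i00 : ⟪n₀, n₀⟫ = D * (1 - x ^ 2) := by
    simp only [n₀, inner_add_left, inner_add_right, real_inner_smul_left, real_inner_smul_right,
      huu, x', y', z', hxe, hye, hze, hD]; ring
  have i11 : ⟪n₁, n₁⟫ = D * (1 - y ^ 2) := by
    simp only [n₁, inner_add_left, inner_add_right, real_inner_smul_left, real_inner_smul_right,
      huu, x', y', z', hxe, hye, hze, hD]; ring
  have i22 : ⟪n₂, n₂⟫ = D * (1 - z ^ 2) := by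
    simp only [n₂, inner_add_left, inner_add_right, real_inner_smul_left, real_inner_smul_right,
      huu, x', y', z', hxe, hye, hze, hD]; ring
  have i01 : ⟪n₀, n₁⟫ = D * (x * y - z) := by
    simp only [n₀, n₁, inner_add_left, inner_add_right, real_inner_smul_left,
      real_inner_smul_right, huu, x', y', z', hxe, hye, hze, hD]; ring
  have i02 : ⟪n₀, n₂⟫ = D * (x * z - y) := by
    simp only [n₀, n₂, inner_add_left, inner_add_right, real_inner_smul_left,
      real_inner_smul_right, huu, x', y', z', hxe, hye, hze, hD]; ring
  have i12 : ⟪n₁, n₂⟫ = D * (y * z - x) := by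
    simp only [n₁, n₂, inner_add_left, inner_add_right, real_inner_smul_left,
      real_inner_smul_right, huu, x', y', z', hxe, hye, hze, hD]; ring
  have hn₀ : n₀ ≠ 0 := fun h => by
    have := (hlin _ _ _ h).1; linarith
  have hn₁ : n₁ ≠ 0 := fun h => by
    have := (hlin _ _ _ h).2.1; linarith
  have hn₂ : n₂ ≠ 0 := fun h => by
    have := (hlin _ _ _ h).2.2; linarith
  have hDpos : 0 < D := by
    have : 0 < (⟪n₀, n₀⟫ : ℝ) := real_inner_self_pos.2 hn₀
    rw [i00] at this
    exact pos_of_mul_pos_left this (by linarith)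
  -- `n₀`, `n₁`, `n₂` are, up to the factor `D`, the dual basis of `u`.
  have hcomb : ∀ c0 c1 c2 : ℝ, ⟪c0 • u 0 + c1 • u 1 + c2 • u 2, n₀⟫ = c0 * D ∧
      ⟪c0 • u 0 + c1 • u 1 + c2 • u 2, n₁⟫ = c1 * D ∧
      ⟪c0 • u 0 + c1 • u 1 + c2 • u 2, n₂⟫ = c2 * D := by
    intro c0 c1 c2
    refine ⟨?_, ?_, ?_⟩ <;>
    · simp only [n₀, n₁, n₂, inner_add_left, inner_add_right, real_inner_smul_left,
        real_inner_smul_right, huu, x', y', z', hxe, hye, hze, hD]; ring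
  let m₀ := ‖n₀‖⁻¹ • n₀
  let m₁ := ‖n₁‖⁻¹ • n₁
  let m₂ := ‖n₂‖⁻¹ • n₂
  have p₀ : 0 < ‖n₀‖⁻¹ := inv_pos.2 (norm_pos_iff.2 hn₀)
  have p₁ : 0 < ‖n₁‖⁻¹ := inv_pos.2 (norm_pos_iff.2 hn₁)
  have p₂ : 0 < ‖n₂‖⁻¹ := inv_pos.2 (norm_pos_iff.2 hn₂)
  have hcone : coneGen u = {v | 0 ≤ ⟪v, m₀⟫ ∧ 0 ≤ ⟪v, m₁⟫ ∧ 0 ≤ ⟪v, m₂⟫} := by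
    let B := basisOfLinearIndependentOfCardEqFinrank hli (by simp)
    have hB : ∀ i, B i = u i := fun i => by simp [B]
    ext v
    simp only [coneGen, Set.mem_ofPred_eq, m₀, m₁, m₂, real_inner_smul_right,
      mul_nonneg_iff_of_pos_left p₀, mul_nonneg_iff_of_pos_left p₁, mul_nonneg_iff_of_pos_left p₂]
    constructor
    · rintro ⟨k, hk, rfl⟩
      rw [Fin.sum_univ_three]
      obtain ⟨e0, e1, e2⟩ := hcomb (k 0) (k 1) (k 2)
      rw [e0, e1, e2]
      exact ⟨mul_nonneg (hk 0) hDpos.le, mul_nonneg (hk 1) hDpos.le, mul_nonneg (hk 2) hDpos.le⟩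
    · rintro ⟨h0, h1, h2⟩
      have hv : v = B.repr v 0 • u 0 + B.repr v 1 • u 1 + B.repr v 2 • u 2 := by
        conv_lhs => rw [← B.sum_repr v, Fin.sum_univ_three, hB, hB, hB]
      obtain ⟨e0, e1, e2⟩ := hcomb (B.repr v 0) (B.repr v 1) (B.repr v 2)
      rw [← hv] at e0 e1 e2
      rw [e0, mul_nonneg_iff_of_pos_right hDpos] at h0
      rw [e1, mul_nonneg_iff_of_pos_right hDpos] at h1
      rw [e2, mul_nonneg_iff_of_pos_right hDpos] at h2
      refine ⟨fun i => B.repr v i, ?_, ?_⟩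
      · intro i; fin_cases i <;> assumption
      · rw [Fin.sum_univ_three]; exact hv
  have hnorm : ∀ n : EuclideanSpace ℝ (Fin 3), n ≠ 0 → ‖‖n‖⁻¹ • n‖ = 1 := fun n hn => by
    rw [norm_smul, norm_inv, norm_norm, inv_mul_cancel₀ (norm_ne_zero_iff.2 hn)]
  have hg := girard m₀ m₁ m₂ (hnorm _ hn₀) (hnorm _ hn₁) (hnorm _ hn₂)
  rw [← hcone] at hg
  simp only [m₀, m₁, m₂, InnerProductGeometry.angle_smul_left_of_pos _ _ p₀,
    InnerProductGeometry.angle_smul_left_of_pos _ _ p₁,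
    InnerProductGeometry.angle_smul_right_of_pos _ _ p₁,
    InnerProductGeometry.angle_smul_right_of_pos _ _ p₂] at hg
  have hperim : InnerProductGeometry.angle n₀ n₁ + InnerProductGeometry.angle n₀ n₂ +
      InnerProductGeometry.angle n₁ n₂ ≤ 2 * Real.pi := by
    have h := InnerProductGeometry.angle_le_angle_add_angle n₀ (-n₂) n₁
    rw [InnerProductGeometry.angle_neg_right, InnerProductGeometry.angle_neg_left,
      InnerProductGeometry.angle_comm n₂ n₁] at h
    linarith
  have hsqrt : ∀ (n : EuclideanSpace ℝ (Fin 3)) (w : ℝ), ⟪n, n⟫ = D * w → ‖n‖ = √D * √w := by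
    intro n w h
    rw [← Real.sqrt_mul hDpos.le, ← h, real_inner_self_eq_norm_sq, Real.sqrt_sq (norm_nonneg _)]
  have hang : ∀ (n m : EuclideanSpace ℝ (Fin 3)) (w w' v : ℝ), ⟪n, n⟫ = D * w → ⟪m, m⟫ = D * w' →
      ⟪n, m⟫ = D * v → Real.cos (InnerProductGeometry.angle n m) * (√w * √w') = v := by
    intro n m w w' v h1 h2 h3
    have h := InnerProductGeometry.cos_angle_mul_norm_mul_norm n m
    rw [hsqrt n w h1, hsqrt m w' h2, h3] at h
    have hd := Real.mul_self_sqrt hDpos.le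
    apply mul_left_cancel₀ hDpos.ne'
    rw [← h]
    conv_lhs => rw [← hd]
    ring
  have hpi := Real.pi_pos
  have hcosp : ∀ t w : ℝ, 0 ≤ t → t ≤ Real.pi → Real.cos t = w → w ^ 2 < 1 →
      0 < Real.cos (t / 2) ∧ Real.cos (t / 2) ^ 2 = (1 + w) / 2 := by
    intro t w h0 h1 hw hw1
    have hne : t ≠ Real.pi := by
      rintro rfl
      rw [Real.cos_pi] at hw
      rw [← hw] at hw1; norm_num at hw1
    have hlt : t < Real.pi := lt_of_le_of_ne h1 hne
    refine ⟨Real.cos_pos_of_mem_Ioo ⟨by linarith, by linarith⟩, ?_⟩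
    rw [Real.cos_sq, mul_div_cancel₀ _ (two_ne_zero' ℝ), hw]; ring
  obtain ⟨qa, qa2⟩ := hcosp a x (ha ▸ InnerProductGeometry.angle_nonneg _ _)
    (ha ▸ InnerProductGeometry.angle_le_pi _ _) cx hx
  obtain ⟨qb, qb2⟩ := hcosp b y (hb ▸ InnerProductGeometry.angle_nonneg _ _)
    (hb ▸ InnerProductGeometry.angle_le_pi _ _) cy hy
  obtain ⟨qc, qc2⟩ := hcosp c z (hc ▸ InnerProductGeometry.angle_nonneg _ _)
    (hc ▸ InnerProductGeometry.angle_le_pi _ _) cz hz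
  have hMpos : 0 < 4 * Real.cos (a / 2) * Real.cos (b / 2) * Real.cos (c / 2) := by positivity
  refine ⟨_, ?_, ?_, hg, hMpos, ?_⟩
  · linarith
  · linarith [InnerProductGeometry.angle_nonneg n₀ n₁, InnerProductGeometry.angle_nonneg n₀ n₂,
      InnerProductGeometry.angle_nonneg n₁ n₂]
  · rw [cx, cy, cz]
    refine cos_half_excess hx hy hz (hD ▸ hDpos) (InnerProductGeometry.angle_nonneg _ _)
      (InnerProductGeometry.angle_le_pi _ _) (InnerProductGeometry.angle_nonneg _ _)
      (InnerProductGeometry.angle_le_pi _ _) (InnerProductGeometry.angle_nonneg _ _)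
      (InnerProductGeometry.angle_le_pi _ _) (hang _ _ _ _ _ i00 i11 i01)
      (hang _ _ _ _ _ i00 i22 i02) (hang _ _ _ _ _ i11 i22 i12) hperim hMpos ?_
    calc _ = 16 * Real.cos (a / 2) ^ 2 * Real.cos (b / 2) ^ 2 * Real.cos (c / 2) ^ 2 := by ring
      _ = _ := by rw [qa2, qb2, qc2]; ring

/-! ### The regular triangle -/

theorem regVec_apply (θ : ℝ) (k : ℕ) : regVec 3 θ k =
    !₂[Real.sin θ * Real.cos (2 * Real.pi * k / 3),
      Real.sin θ * Real.sin (2 * Real.pi * k / 3), Real.cos θ] := by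
  rfl

theorem cos_two_pi_div_three : Real.cos (2 * Real.pi / 3) = -1 / 2 := by
  rw [show 2 * Real.pi / 3 = Real.pi - Real.pi / 3 by ring, Real.cos_pi_sub, Real.cos_pi_div_three]
  norm_num

theorem inner_regVec (θ : ℝ) (j k : ℕ) : ⟪regVec 3 θ j, regVec 3 θ k⟫ =
    Real.sin θ ^ 2 * Real.cos (2 * Real.pi * j / 3 - 2 * Real.pi * k / 3) + Real.cos θ ^ 2 := by
  rw [regVec_apply, regVec_apply, Real.cos_sub, PiLp.inner_apply, Fin.sum_univ_three]
  simp
  ring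

theorem norm_regVec (θ : ℝ) (k : ℕ) : ‖regVec 3 θ k‖ = 1 := by
  have h := inner_regVec θ k k
  rw [sub_self, Real.cos_zero, mul_one, Real.sin_sq_add_cos_sq, real_inner_self_eq_norm_sq] at h
  nlinarith [norm_nonneg (regVec 3 θ k)]

theorem inner_regVec_of_ne (θ : ℝ) (j k : Fin 3) (hjk : j ≠ k) :
    ⟪regVec 3 θ j, regVec 3 θ k⟫ = Real.cos θ ^ 2 - Real.sin θ ^ 2 / 2 := by
  have h4 : Real.cos (2 * Real.pi * 2 / 3) = -1 / 2 := by
    rw [show 2 * Real.pi * 2 / 3 = 2 * Real.pi - 2 * Real.pi / 3 by ring, Real.cos_two_pi_sub,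
      cos_two_pi_div_three]
  have h5 : Real.cos (2 * Real.pi / 3 - 2 * Real.pi * 2 / 3) = -1 / 2 := by
    rw [show 2 * Real.pi / 3 - 2 * Real.pi * 2 / 3 = -(2 * Real.pi / 3) by ring, Real.cos_neg,
      cos_two_pi_div_three]
  have h6 : Real.cos (2 * Real.pi * 2 / 3 - 2 * Real.pi / 3) = -1 / 2 := by
    rw [show 2 * Real.pi * 2 / 3 - 2 * Real.pi / 3 = 2 * Real.pi / 3 by ring, cos_two_pi_div_three]
  rw [inner_regVec]
  fin_cases j <;> fin_cases k <;> simp [cos_two_pi_div_three, h4, h5, h6] at hjk ⊢ <;> ring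

theorem linearIndependent_regVec {θ : ℝ} (hθ : θ ∈ Set.Ioo 0 (Real.pi / 2)) :
    LinearIndependent ℝ (fun k : Fin 3 => regVec 3 θ k) := by
  have hpi := Real.pi_pos
  have hs : 0 < Real.sin θ := Real.sin_pos_of_pos_of_lt_pi hθ.1 (by linarith [hθ.2])
  have hc : 0 < Real.cos θ := Real.cos_pos_of_mem_Ioo ⟨by linarith [hθ.1], hθ.2⟩
  have hsc := Real.sin_sq_add_cos_sq θ
  rw [Fintype.linearIndependent_iff]
  intro g hg
  have hself : ∀ k : Fin 3, ⟪regVec 3 θ k, regVec 3 θ k⟫ = (1 : ℝ) := fun k => by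
    rw [real_inner_self_eq_norm_sq, norm_regVec]; norm_num
  have hin : ∀ k : Fin 3, ⟪∑ i : Fin 3, g i • regVec 3 θ i, regVec 3 θ k⟫ = (0 : ℝ) := fun k => by
    rw [hg, inner_zero_left]
  have a0 := hin 0
  have a1 := hin 1
  have a2 := hin 2
  simp only [Fin.sum_univ_three, inner_add_left, real_inner_smul_left] at a0 a1 a2
  rw [hself, inner_regVec_of_ne θ 1 0 (by decide), inner_regVec_of_ne θ 2 0 (by decide)] at a0
  rw [hself, inner_regVec_of_ne θ 0 1 (by decide), inner_regVec_of_ne θ 2 1 (by decide)] at a1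
  rw [hself, inner_regVec_of_ne θ 0 2 (by decide), inner_regVec_of_ne θ 1 2 (by decide)] at a2
  have s2 : 0 < Real.sin θ ^ 2 := by positivity
  have c2 : 0 < Real.cos θ ^ 2 := by positivity
  have e : Real.cos θ ^ 2 - Real.sin θ ^ 2 / 2 = 1 - 3 / 2 * Real.sin θ ^ 2 := by linarith
  rw [e] at a0 a1 a2
  have h01 : g 0 = g 1 := by
    have : Real.sin θ ^ 2 * (g 0 - g 1) = 0 := by linear_combination (a0 - a1) * (2 / 3)
    rcases mul_eq_zero.1 this with h | h <;> linarith
  have h02 : g 0 = g 2 := by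
    have : Real.sin θ ^ 2 * (g 0 - g 2) = 0 := by linear_combination (a0 - a2) * (2 / 3)
    rcases mul_eq_zero.1 this with h | h <;> linarith
  have h0 : g 0 = 0 := by
    rw [← h01, ← h02] at a0
    have : Real.cos θ ^ 2 * g 0 = 0 := by linear_combination a0 / 3 + g 0 * hsc
    rcases mul_eq_zero.1 this with h | h <;> linarith
  intro i
  fin_cases i
  · exact h0
  · exact h01 ▸ h0
  · exact h02 ▸ h0

/-- Isodual inequality for spherical triangles: among spherical triangles whose polars have
a given area, the regular spherical triangle maximizes the area. -/
theorem spherical_triangle_isodual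
    (u : Fin 3 → EuclideanSpace ℝ (Fin 3))
    (hli : LinearIndependent ℝ u) (hunit : ∀ i, ‖u i‖ = 1)
    (θ : ℝ) (hθ : θ ∈ Set.Ioo 0 (Real.pi / 2))
    (harea : μH[2] (polarCone (coneGen fun k : Fin 3 => regVec 3 θ k) ∩
        Metric.sphere (0 : EuclideanSpace ℝ (Fin 3)) 1) =
      μH[2] (polarCone (coneGen u) ∩ Metric.sphere (0 : EuclideanSpace ℝ (Fin 3)) 1)) :
    μH[2] (coneGen u ∩ Metric.sphere (0 : EuclideanSpace ℝ (Fin 3)) 1) ≤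
      μH[2] ((coneGen fun k : Fin 3 => regVec 3 θ k) ∩
        Metric.sphere (0 : EuclideanSpace ℝ (Fin 3)) 1) := by
  have hpi := Real.pi_pos
  set w : Fin 3 → EuclideanSpace ℝ (Fin 3) := fun k => regVec 3 θ k with hw
  have hwli : LinearIndependent ℝ w := linearIndependent_regVec hθ
  have hwn : ∀ i, ‖w i‖ = 1 := fun i => norm_regVec θ i
  rw [← sphereMeasure_apply, ← sphereMeasure_apply] at harea ⊢
  rw [← ENNReal.toReal_le_toReal (measure_ne_top _ _) (measure_ne_top _ _)]
  change sphereMeasure.real _ ≤ sphereMeasure.real _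
  have harea' : sphereMeasure.real (polarCone (coneGen w)) =
    sphereMeasure.real (polarCone (coneGen u)) := congrArg ENNReal.toReal harea
  rw [polar_area u hunit, polar_area w hwn] at harea'
  obtain ⟨E, hE0, hE1, hE, hM, hcos⟩ := triangle_area u hli hunit rfl rfl rfl
  obtain ⟨E', hE0', hE1', hE', hM', hcos'⟩ := triangle_area w hwli hwn rfl rfl rfl
  obtain ⟨s, hs⟩ : ∃ s, s = Real.arccos (Real.cos θ ^ 2 - Real.sin θ ^ 2 / 2) := ⟨_, rfl⟩
  have hang : ∀ i j : Fin 3, i ≠ j → InnerProductGeometry.angle (w i) (w j) = s := by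
    intro i j hij
    rw [InnerProductGeometry.angle, hwn, hwn, hs, ← inner_regVec_of_ne θ i j hij]
    simp [hw]
  rw [hang 0 1 (by decide), hang 0 2 (by decide), hang 1 2 (by decide)] at harea' hM' hcos'
  rw [hE, hE']
  have hκ0 : 0 ≤ sphereMeasure.real Set.univ / (4 * Real.pi) := by positivity
  rcases hκ0.eq_or_lt with hκ | hκ
  · rw [← hκ, zero_mul, zero_mul]
  have hper := mul_left_cancel₀ hκ.ne' harea'
  -- The cosine of the side of the regular triangle exceeds `-1 / 2`.
  have hslt : 3 * s < 2 * Real.pi := by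
    have hc : 0 < Real.cos θ := Real.cos_pos_of_mem_Ioo ⟨by linarith [hθ.1], hθ.2⟩
    have hsc := Real.sin_sq_add_cos_sq θ
    have h1 : -1 / 2 < Real.cos θ ^ 2 - Real.sin θ ^ 2 / 2 := by nlinarith
    have h2 : Real.arccos (-1 / 2) = 2 * Real.pi / 3 := by
      rw [← cos_two_pi_div_three, Real.arccos_cos (by linarith) (by linarith)]
    have h3 := Real.arccos_lt_arccos (by norm_num) h1 (by nlinarith [sq_nonneg (Real.sin θ)])
    rw [h2, ← hs] at h3
    linarith
  apply mul_le_mul_of_nonneg_left _ hκ.le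
  have t1 := InnerProductGeometry.angle_le_angle_add_angle (u 1) (u 0) (u 2)
  have t2 := InnerProductGeometry.angle_le_angle_add_angle (u 0) (u 1) (u 2)
  have t3 := InnerProductGeometry.angle_le_angle_add_angle (u 0) (u 2) (u 1)
  rw [InnerProductGeometry.angle_comm (u 1) (u 0)] at t1
  rw [InnerProductGeometry.angle_comm (u 2) (u 1)] at t3
  generalize InnerProductGeometry.angle (u 1) (u 2) = a at *
  generalize InnerProductGeometry.angle (u 0) (u 2) = b at *
  generalize InnerProductGeometry.angle (u 0) (u 1) = c at *
  have key := quotient_le (a := a) (b := b) (c := c) (s := s) (by linarith) (by linarith)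
    (by linarith) (by linarith) hslt
  rw [← hcos, ← hcos'] at key
  have hcc : Real.cos (E' / 2) ≤ Real.cos (E / 2) := by
    refine le_of_mul_le_mul_left ?_ (mul_pos hM hM')
    linarith
  have := (Real.strictAntiOn_cos.le_iff_ge (a := E' / 2) (b := E / 2)
    ⟨by linarith, by linarith⟩ ⟨by linarith, by linarith⟩).1 hcc
  linarith
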